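/- Let G and H be Polish groups, let X and Y be compact metrizable spaces, and let e_G : G → X and e_H : H → Y be topological embeddings with dense images. Let M_G ⊆ X³ be the closure of {(e_G(g), e_G(f), e_G(gf)) : g, f ∈ G} and M_H ⊆ Y³ the closure of {(e_H(g), e_H(f), e_H(gf)) : g, f ∈ H}. If ψ : X → Y is a homeomorphism with (ψ×ψ×ψ)[M_G] = M_H, then ψ[e_G[G]] = e_H[H], and the induced bijection e_H⁻¹ ∘ ψ ∘ e_G : G → H is an isomorphism of topological groups. -/

import Mathlib

/-- The coordinatewise action of a map on triples. -/
def cube3 {A B : Type*} (f : A → B) : A × A × A → B × B × B :=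
  fun p => (f p.1, f p.2.1, f p.2.2)

/-!
Move both groups into `Y`. Each range is a dense `Gδ`: it consists of the points `y` at which the
traces of the neighbourhoods of `y` form a Cauchy filter for a complete metric. By Baire category
every element of `G` is therefore a quotient `t / s` of elements that lie in both groups, and
likewise for `H`. Division in `H` is continuous and `Y` is Hausdorff, so `(z, s, t)` belongs to the
closed multiplication graph of `H` only for `z = t / s`; this puts the quotients formed in `G` and
in `H` at the same point of `Y`.
-/

open Filter Function Set Topology TopologicalSpace Uniformity

section DenseInducing

variable {A X : Type*} [TopologicalSpace X] {e : A → X}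

theorem isOpen_setOfPred_mem_comap_nhds_prod_self (e : A → X) (U : Set (A × A)) :
    IsOpen {x | U ∈ comap e (𝓝 x) ×ˢ comap e (𝓝 x)} := by
  have h_eq : {x | U ∈ comap e (𝓝 x) ×ˢ comap e (𝓝 x)} =
      (fun x => (x, x)) ⁻¹' interior (kernImage (Prod.map e e) U) := by
    ext x
    rw [mem_preimage, mem_interior_iff_mem_nhds, nhds_prod_eq, ← mem_comap'']
    exact iff_of_eq (congrArg (U ∈ ·) prod_comap_comap_eq)
  rw [h_eq]
  exact isOpen_interior.preimage (by fun_prop)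

theorem isGδ_setOfPred_cauchy_comap_nhds [UniformSpace A] [IsCountablyGenerated (𝓤 A)]
    (he : DenseRange e) : IsGδ {x | Cauchy (comap e (𝓝 x))} := by
  obtain ⟨U, hU⟩ := (𝓤 A).exists_antitone_basis
  have h_eq : {x | Cauchy (comap e (𝓝 x))} =
      ⋂ n, {x | U n ∈ comap e (𝓝 x) ×ˢ comap e (𝓝 x)} := by
    ext x
    have : NeBot (comap e (𝓝 x)) :=
      comap_neBot_iff_frequently.2 (mem_closure_iff_frequently.1 (he x))
    simp [cauchy_iff_le, hU.1.ge_iff]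
  rw [h_eq]
  exact .iInter_of_isOpen fun n => isOpen_setOfPred_mem_comap_nhds_prod_self e (U n)

theorem setOfPred_cauchy_comap_nhds_eq_range [UniformSpace A] [CompleteSpace A] [T2Space X]
    (he : IsInducing e) : {x | Cauchy (comap e (𝓝 x))} = range e := by
  apply Subset.antisymm
  · intro x hx
    have := hx.1
    obtain ⟨a, ha⟩ := CompleteSpace.complete hx
    exact ⟨a, tendsto_nhds_unique ((he.continuous.tendsto a).mono_left ha) tendsto_comap⟩
  · rintro _ ⟨a, rfl⟩
    exact (he.nhds_eq_comap a ▸ cauchy_nhds : Cauchy (comap e (𝓝 (e a))))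

variable [TopologicalSpace A]

theorem isGδ_range_of_isDenseInducing [IsCompletelyPseudoMetrizableSpace A] [T2Space X]
    (he : IsDenseInducing e) : IsGδ (range e) := by
  let := upgradeIsCompletelyPseudoMetrizable A
  rw [← setOfPred_cauchy_comap_nhds_eq_range he.isInducing]
  exact isGδ_setOfPred_cauchy_comap_nhds he.dense

theorem dense_preimage_of_dense_inter_range (he : IsInducing e) {s : Set X}
    (hs : Dense (s ∩ range e)) : Dense (e ⁻¹' s) := by
  rw [he.dense_iff, image_preimage_eq_inter_range]
  exact fun a => hs (e a)

theorem baireSpace_of_isDenseInducing [BaireSpace A] (he : IsDenseInducing e) :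
    BaireSpace X where
  baire_property U hUo hUd := by
    have h_dense (n : ℕ) : Dense (e ⁻¹' U n) :=
      dense_preimage_of_dense_inter_range he.isInducing
        ((hUd n).inter_of_isOpen_left he.dense (hUo n))
    have h_inter : Dense (⋂ n, e ⁻¹' U n) :=
      dense_iInter_of_isOpen_nat (fun n => (hUo n).preimage he.continuous) h_dense
    rw [← preimage_iInter] at h_inter
    exact (he.dense_image.2 h_inter).mono (image_preimage_subset e _)

theorem dense_preimage_range_of_isDenseInducing {B : Type*} [TopologicalSpace B] [T2Space X]
    [IsCompletelyPseudoMetrizableSpace A] [IsCompletelyPseudoMetrizableSpace B] {f : B → X}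
    (he : IsDenseInducing e) (hf : IsDenseInducing f) : Dense (e ⁻¹' range f) := by
  have := baireSpace_of_isDenseInducing he
  exact dense_preimage_of_dense_inter_range he.isInducing <|
    Dense.inter_of_Gδ (isGδ_range_of_isDenseInducing hf) (isGδ_range_of_isDenseInducing he)
      hf.dense he.dense

end DenseInducing

theorem exists_mem_apply_mem_of_isGδ_of_dense {A B : Type*} [TopologicalSpace A]
    [TopologicalSpace B] [BaireSpace A] [Nonempty A] (φ : A ≃ₜ B) {s : Set A} {t : Set B}
    (hs : IsGδ s) (hsd : Dense s) (ht : IsGδ t) (htd : Dense t) : ∃ a ∈ s, φ a ∈ t :=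
  (Dense.inter_of_Gδ hs (ht.preimage φ.continuous) hsd (htd.preimage φ.isOpenMap)).nonempty

theorem exists_mem_range_mul_mem_range {G B X : Type*} [Group G] [TopologicalSpace G]
    [SeparatelyContinuousMul G] [IsCompletelyPseudoMetrizableSpace G] [TopologicalSpace B]
    [IsCompletelyPseudoMetrizableSpace B] [TopologicalSpace X] [T2Space X] {e : G → X} {f : B → X}
    (he : IsDenseInducing e) (hf : IsDenseInducing f) (g : G) :
    ∃ s, e s ∈ range f ∧ e (g * s) ∈ range f := by
  have h_Gδ : IsGδ (e ⁻¹' range f) := (isGδ_range_of_isDenseInducing hf).preimage he.continuous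
  have h_dense := dense_preimage_range_of_isDenseInducing he hf
  exact exists_mem_apply_mem_of_isGδ_of_dense (.mulLeft g) h_Gδ h_dense h_Gδ h_dense

theorem exists_homeomorph_of_range_eq {A B X : Type*} [TopologicalSpace A] [TopologicalSpace B]
    [TopologicalSpace X] {e : A → X} {f : B → X} (he : IsEmbedding e) (hf : IsEmbedding f)
    (h : range e = range f) : ∃ φ : A ≃ₜ B, ∀ a, f (φ a) = e a := by
  refine ⟨he.toHomeomorph.trans ((Homeomorph.setCongr h).trans hf.toHomeomorph.symm), fun a => ?_⟩
  exact congrArg Subtype.val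
    (hf.toHomeomorph.apply_symm_apply (Homeomorph.setCongr h (he.toHomeomorph a)))

/-- The graph of the multiplication of `M`, transported to triples of points of `X` along
`e : M → X`. Its closure is the set `M_G` of the rigidity theorem. -/
def mulGraph {M X : Type*} [Mul M] (e : M → X) : Set (X × X × X) :=
  {p | ∃ g f : M, p = (e g, e f, e (g * f))}

theorem mulGraph_eq_range {M X : Type*} [Mul M] (e : M → X) :
    mulGraph e = range fun q : M × M => (e q.1, e q.2, e (q.1 * q.2)) := by
  ext p
  simp [mulGraph, eq_comm]

section MulGraph

variable {G H X : Type*} [TopologicalSpace X]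

theorem exists_tendsto_of_mem_closure_mulGraph {M : Type*} [Mul M] {e : M → X} {x y z : X}
    (h : (x, y, z) ∈ closure (mulGraph e)) :
    ∃ F : Filter (M × M), NeBot F ∧ Tendsto (fun q => e q.1) F (𝓝 x) ∧
      Tendsto (fun q => e q.2) F (𝓝 y) ∧ Tendsto (fun q => e (q.1 * q.2)) F (𝓝 z) := by
  rw [mulGraph_eq_range] at h
  have ht := tendsto_comap (f := fun q : M × M => (e q.1, e q.2, e (q.1 * q.2)))
    (x := 𝓝 (x, y, z))
  exact ⟨_, comap_neBot_iff_frequently.2 (mem_closure_iff_frequently.1 h),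
    ht.fst_nhds, ht.snd_nhds.fst_nhds, ht.snd_nhds.snd_nhds⟩

theorem eq_mul_of_mem_closure_mulGraph {M : Type*} [Mul M] [TopologicalSpace M] [ContinuousMul M]
    [T2Space X] {e : M → X} (he : IsInducing e) {g f : M} {z : X}
    (h : (e g, e f, z) ∈ closure (mulGraph e)) : z = e (g * f) := by
  obtain ⟨F, _, hg, hf, hz⟩ := exists_tendsto_of_mem_closure_mulGraph h
  have h_mul : Tendsto (fun q : M × M => q.1 * q.2) F (𝓝 (g * f)) :=
    (he.tendsto_nhds_iff.2 hg).mul (he.tendsto_nhds_iff.2 hf)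
  exact tendsto_nhds_unique hz ((he.continuous.tendsto _).comp h_mul)

variable [Group G] [Group H] [TopologicalSpace H] [T2Space X]

theorem eq_div_of_mem_closure_mulGraph [ContinuousDiv H] {e : H → X} (he : IsInducing e)
    {s t : H} {z : X} (h : (z, e s, e t) ∈ closure (mulGraph e)) : z = e (t / s) := by
  obtain ⟨F, _, hz, hs, ht⟩ := exists_tendsto_of_mem_closure_mulGraph h
  have h_div : Tendsto (fun q : H × H => q.1 * q.2 / q.2) F (𝓝 (t / s)) :=
    (he.tendsto_nhds_iff.2 ht).div' (he.tendsto_nhds_iff.2 hs)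
  simp only [mul_div_cancel_right] at h_div
  exact tendsto_nhds_unique hz ((he.continuous.tendsto _).comp h_div)

theorem apply_div_eq_of_mulGraph_subset_closure [ContinuousDiv H] {eG : G → X} {eH : H → X}
    (hH : IsInducing eH) (hM : mulGraph eG ⊆ closure (mulGraph eH)) {a b : G} {s t : H}
    (hs : eH s = eG a) (ht : eH t = eG b) : eG (b / a) = eH (t / s) := by
  apply eq_div_of_mem_closure_mulGraph hH
  rw [hs, ht]
  exact hM ⟨b / a, a, by rw [div_mul_cancel]⟩

variable [TopologicalSpace G] {eG : G → X} {eH : H → X}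

theorem range_eq_of_mulGraph_subset_closure [SeparatelyContinuousMul G]
    [IsCompletelyPseudoMetrizableSpace G] [IsTopologicalGroup H]
    [IsCompletelyPseudoMetrizableSpace H] (hG : IsDenseInducing eG) (hH : IsDenseInducing eH)
    (hM : mulGraph eG ⊆ closure (mulGraph eH)) : range eG = range eH := by
  apply Subset.antisymm
  · rintro _ ⟨g, rfl⟩
    obtain ⟨a, ⟨s, hs⟩, t, ht⟩ := exists_mem_range_mul_mem_range hG hH g
    have h_div := apply_div_eq_of_mulGraph_subset_closure hH.isInducing hM hs ht
    rw [mul_div_cancel_right] at h_div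
    exact ⟨t / s, h_div.symm⟩
  · rintro _ ⟨h, rfl⟩
    obtain ⟨s, ⟨a, ha⟩, b, hb⟩ := exists_mem_range_mul_mem_range hH hG h
    have h_div := apply_div_eq_of_mulGraph_subset_closure hH.isInducing hM ha.symm hb.symm
    rw [mul_div_cancel_right] at h_div
    exact ⟨b / a, h_div⟩

theorem exists_continuousMulEquiv_of_range_eq [ContinuousMul H] (hG : IsEmbedding eG)
    (hH : IsEmbedding eH) (h_range : range eG = range eH)
    (hM : mulGraph eG ⊆ closure (mulGraph eH)) : ∃ π : G ≃ₜ* H, ∀ g, eH (π g) = eG g := by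
  obtain ⟨φ, hφ⟩ := exists_homeomorph_of_range_eq hG hH h_range
  have map_mul (a b : G) : φ (a * b) = φ a * φ b := by
    apply hH.injective
    apply eq_mul_of_mem_closure_mulGraph hH.isInducing
    simp only [hφ]
    exact hM ⟨a, b, rfl⟩
  exact ⟨{ φ with map_mul' := map_mul }, hφ⟩

end MulGraph

theorem rigidity_of_closure_of_mult_graph_general
    {G H X Y : Type*} [Group G] [TopologicalSpace G] [SeparatelyContinuousMul G]
    [IsCompletelyMetrizableSpace G] [Group H] [TopologicalSpace H] [IsTopologicalGroup H]
    [IsCompletelyMetrizableSpace H] [TopologicalSpace X] [TopologicalSpace Y] [T2Space Y]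
    (eG : G → X) (hG : IsEmbedding eG) (hGd : DenseRange eG)
    (eH : H → Y) (hH : IsEmbedding eH) (hHd : DenseRange eH)
    (ψ : X → Y) (hψ : IsEmbedding ψ) (hψd : DenseRange ψ)
    (hM : cube3 ψ '' closure (mulGraph eG) ⊆ closure (mulGraph eH)) :
    ψ '' range eG = range eH ∧
    ∃ π : G ≃* H, Continuous π ∧ Continuous π.symm ∧ ∀ g : G, eH (π g) = ψ (eG g) := by
  have hψG : IsEmbedding (ψ ∘ eG) := hψ.comp hG
  have hψGd : DenseRange (ψ ∘ eG) := hψd.comp hGd hψ.continuous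
  have hψM : mulGraph (ψ ∘ eG) ⊆ closure (mulGraph eH) := by
    rintro _ ⟨g, f, rfl⟩
    exact hM ⟨_, subset_closure ⟨g, f, rfl⟩, rfl⟩
  have h_range : range (ψ ∘ eG) = range eH :=
    range_eq_of_mulGraph_subset_closure ⟨hψG.isInducing, hψGd⟩ ⟨hH.isInducing, hHd⟩ hψM
  obtain ⟨π, hπ⟩ := exists_continuousMulEquiv_of_range_eq hψG hH h_range hψM
  exact ⟨by rw [← range_comp, h_range], π.toMulEquiv, π.continuous, π.symm.continuous, hπ⟩

/-- Rigidity: if Polish groups `G`, `H` are densely embedded in compact metrizable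
spaces `X`, `Y` and a homeomorphism `ψ : X → Y` maps the closure of the multiplication
graph of `G` onto that of `H`, then `ψ` maps the copy of `G` onto the copy of `H`
and induces an isomorphism of topological groups `G → H`. -/
theorem rigidity_of_closure_of_mult_graph
    {G H X Y : Type*} [Group G] [TopologicalSpace G] [IsTopologicalGroup G] [PolishSpace G]
    [Group H] [TopologicalSpace H] [IsTopologicalGroup H] [PolishSpace H]
    [TopologicalSpace X] [CompactSpace X] [TopologicalSpace.MetrizableSpace X]
    [TopologicalSpace Y] [CompactSpace Y] [TopologicalSpace.MetrizableSpace Y]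
    (eG : G → X) (hG : Topology.IsEmbedding eG) (hGd : Dense (Set.range eG))
    (eH : H → Y) (hH : Topology.IsEmbedding eH) (hHd : Dense (Set.range eH))
    (ψ : X ≃ₜ Y)
    (hψ : cube3 ψ '' closure {p : X × X × X | ∃ g f : G, p = (eG g, eG f, eG (g * f))} =
      closure {p : Y × Y × Y | ∃ g f : H, p = (eH g, eH f, eH (g * f))}) :
    ψ '' Set.range eG = Set.range eH ∧
    ∃ π : G ≃* H, Continuous π ∧ Continuous π.symm ∧ ∀ g : G, eH (π g) = ψ (eG g) :=
  rigidity_of_closure_of_mult_graph_general eG hG hGd eH hH hHd ψ ψ.isEmbedding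
    ψ.surjective.denseRange hψ.subset
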